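/- Let θ be a real number with |θ| ≤ π/6, set A = e^{iθ} and δ = -2cos(2θ); then δ² ≥ 1, so b = √(1 - δ⁻²) is real. With U₁ = δ·[[1,0],[0,0]] and U₂ = δ·[[δ⁻², δ⁻¹b],[δ⁻¹b, b²]], the matrices ρ(σ₁) = A·I + A⁻¹·U₁ and ρ(σ₂) = A·I + A⁻¹·U₂ are unitary 2×2 matrices satisfying the braid relation ρ(σ₁)ρ(σ₂)ρ(σ₁) = ρ(σ₂)ρ(σ₁)ρ(σ₂), and each ρ(σᵢ) is invertible with inverse A⁻¹·I + A·Uᵢ. Hence σ₁ ↦ ρ(σ₁), σ₂ ↦ ρ(σ₂) defines a unitary representation of the three-strand braid group B₃. -/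

import Mathlib

open Matrix

/-! Put `x = U₁`, `y = U₂`, and let `A⁻¹ • 1 + A • x` be the candidate inverse of `A • 1 + A⁻¹ • x`.
For `x * x = δ • x` the product of the two is `1 + (A² + A⁻² + δ) • x`, which is `1` exactly because
of the choice of `δ`. With `x * y * x = x`, the triple product for `x`, `y`, `x` collapses to
`A³ • 1 + A • (x + y) + A⁻¹ • (x * y + y * x)`, which is symmetric in `x` and `y`: this is the braid
relation. Finally, `δ` times the orthogonal projections onto two lines satisfies these relations as
soon as unit vectors `v`, `w` spanning the lines have `|⟨v, w⟩|² = δ⁻²`; such vectors exist because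
`δ² ≥ 1`. -/

section TemperleyLieb

/-- The defining relations of the Temperley–Lieb algebra `TL₃` with loop value `δ`, for the images
`x`, `y` of its two generators. -/
structure IsTemperleyLiebPair {R M : Type*} [Mul M] [SMul R M] (δ : R) (x y : M) :
    Prop where
  mul_self_left : x * x = δ • x
  mul_self_right : y * y = δ • y
  left_right_left : x * y * x = x
  right_left_right : y * x * y = y

variable {R M : Type*} [CommRing R] [Semiring M] [Algebra R M]

/-- The value `-A² - A⁻²` of a closed loop in the Kauffman bracket with parameter `A`. -/
def loopValue (A : Rˣ) : R := -(A : R) ^ 2 - (↑A⁻¹ : R) ^ 2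

/-- The Kauffman bracket resolution `A • 1 + A⁻¹ • x` of a crossing, where `x` is the image of a
Temperley–Lieb generator. Taking `A` to be a unit makes the opposite crossing `kauffman A⁻¹ x`. -/
def kauffman (A : Rˣ) (x : M) : M := (A : R) • (1 : M) + (↑A⁻¹ : R) • x

theorem loopValue_inv (A : Rˣ) : loopValue A⁻¹ = loopValue A := by
  simp only [loopValue, inv_inv]
  ring

theorem kauffman_mul_kauffman_inv {A : Rˣ} {x : M} (hx : x * x = loopValue A • x) :
    kauffman A x * kauffman A⁻¹ x = 1 := by
  simp only [kauffman, inv_inv, mul_add, add_mul, smul_mul_assoc, mul_smul_comm, one_mul, mul_one,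
    hx, smul_smul, loopValue]
  match_scalars
  · linear_combination A.mul_inv
  · linear_combination (-(A : R) ^ 2 - (↑A⁻¹ : R) ^ 2) * A.mul_inv

theorem kauffman_inv_mul_kauffman {A : Rˣ} {x : M} (hx : x * x = loopValue A • x) :
    kauffman A⁻¹ x * kauffman A x = 1 := by
  rw [← loopValue_inv] at hx
  simpa only [inv_inv] using kauffman_mul_kauffman_inv hx

theorem kauffman_mul_kauffman_mul_kauffman {A : Rˣ} {x y : M} (hx : x * x = loopValue A • x)
    (hxyx : x * y * x = x) :
    kauffman A x * kauffman A y * kauffman A x =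
      (A : R) ^ 3 • (1 : M) + (A : R) • (x + y) + (↑A⁻¹ : R) • (x * y + y * x) := by
  simp only [kauffman, mul_add, add_mul, smul_mul_assoc, mul_smul_comm, one_mul, mul_one, hx, hxyx,
    smul_smul, loopValue]
  match_scalars
  · ring
  · linear_combination ((A : R) - (↑A⁻¹ : R) ^ 3 - (A : R) ^ 2 * ↑A⁻¹) * A.mul_inv
  · linear_combination (A : R) * A.mul_inv
  · linear_combination (↑A⁻¹ : R) * A.mul_inv
  · linear_combination (↑A⁻¹ : R) * A.mul_inv

theorem IsTemperleyLiebPair.kauffman_braid {A : Rˣ} {x y : M}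
    (h : IsTemperleyLiebPair (loopValue A) x y) :
    kauffman A x * kauffman A y * kauffman A x = kauffman A y * kauffman A x * kauffman A y := by
  rw [kauffman_mul_kauffman_mul_kauffman h.mul_self_left h.left_right_left,
    kauffman_mul_kauffman_mul_kauffman h.mul_self_right h.right_left_right,
    add_comm y x, add_comm (y * x)]

variable [StarRing R] [StarRing M] [StarModule R M]

theorem star_kauffman {A : Rˣ} {x : M} (hA : star A = A⁻¹) (hx : IsSelfAdjoint x) :
    star (kauffman A x) = kauffman A⁻¹ x := by
  simp only [kauffman, star_add, star_smul, star_one, hx.star_eq, ← Units.coe_star, star_inv, hA]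

theorem kauffman_mem_unitary {A : Rˣ} {x : M} (hA : star A = A⁻¹) (hx : IsSelfAdjoint x)
    (hxx : x * x = loopValue A • x) : kauffman A x ∈ unitary M := by
  rw [Unitary.mem_iff, star_kauffman hA hx]
  exact ⟨kauffman_inv_mul_kauffman hxx, kauffman_mul_kauffman_inv hxx⟩

end TemperleyLieb

section ScaledProjection

variable {R n : Type*} [CommRing R] [StarRing R]

/-- The matrix `δ • v vᴴ`: for a unit vector `v`, this is `δ` times the orthogonal projection onto
the line spanned by `v`. -/
def scaledProjection (δ : R) (v : n → R) : Matrix n n R := δ • vecMulVec v (star v)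

theorem isSelfAdjoint_scaledProjection {δ : R} (hδ : IsSelfAdjoint δ) (v : n → R) :
    IsSelfAdjoint (scaledProjection δ v) := by
  refine hδ.smul ?_
  rw [IsSelfAdjoint, star_eq_conjTranspose, conjTranspose_vecMulVec, star_star]

variable [Fintype n]

theorem scaledProjection_mul_self (δ : R) {v : n → R} (hv : star v ⬝ᵥ v = 1) :
    scaledProjection δ v * scaledProjection δ v = δ • scaledProjection δ v := by
  simp only [scaledProjection, smul_mul_assoc, mul_smul_comm, vecMulVec_mul_vecMulVec, hv, one_smul]

theorem scaledProjection_mul_mul_self {δ : R} {v w : n → R}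
    (hvw : δ ^ 2 * ((star v ⬝ᵥ w) * (star w ⬝ᵥ v)) = 1) :
    scaledProjection δ v * scaledProjection δ w * scaledProjection δ v = scaledProjection δ v := by
  simp only [scaledProjection, smul_mul_assoc, mul_smul_comm, vecMulVec_mul_vecMulVec,
    vecMulVec_smul, smul_smul]
  congr 1
  linear_combination δ * hvw

theorem isTemperleyLiebPair_scaledProjection {δ : R} {v w : n → R} (hv : star v ⬝ᵥ v = 1)
    (hw : star w ⬝ᵥ w = 1) (hvw : δ ^ 2 * ((star v ⬝ᵥ w) * (star w ⬝ᵥ v)) = 1) :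
    IsTemperleyLiebPair δ (scaledProjection δ v) (scaledProjection δ w) where
  mul_self_left := scaledProjection_mul_self δ hv
  mul_self_right := scaledProjection_mul_self δ hw
  left_right_left := scaledProjection_mul_mul_self hvw
  right_left_right := scaledProjection_mul_mul_self (by rwa [mul_comm (star w ⬝ᵥ v)])

theorem scaledProjection_pair (δ : R) {a b : R} (ha : IsSelfAdjoint a) (hb : IsSelfAdjoint b) :
    scaledProjection δ ![a, b] = δ • !![a ^ 2, a * b; a * b, b ^ 2] := by
  rw [scaledProjection]
  congr 1
  ext i j
  fin_cases i <;> fin_cases j <;>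
    simp [vecMulVec_apply, pow_two, mul_comm, ha.star_eq, hb.star_eq]

theorem isTemperleyLiebPair_scaledProjection_pair {δ a b : R} (ha : IsSelfAdjoint a)
    (hb : IsSelfAdjoint b) (hδa : δ * a = 1) (hab : a ^ 2 + b ^ 2 = 1) :
    IsTemperleyLiebPair δ (scaledProjection δ ![1, 0]) (scaledProjection δ ![a, b]) := by
  apply isTemperleyLiebPair_scaledProjection
  · simp [dotProduct]
  · simpa [dotProduct, ha.star_eq, hb.star_eq, ← pow_two] using hab
  · simp [dotProduct, ha.star_eq, ← pow_two, ← mul_pow, hδa]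

end ScaledProjection

theorem inv_sq_add_sqrt_one_sub_inv_sq_sq {δ : ℝ} (hδ : 1 ≤ δ ^ 2) :
    δ⁻¹ ^ 2 + √(1 - δ⁻¹ ^ 2) ^ 2 = 1 := by
  have h : δ⁻¹ ^ 2 ≤ 1 := by simpa only [inv_pow] using inv_le_one_of_one_le₀ hδ
  rw [Real.sq_sqrt (sub_nonneg.mpr h), add_sub_cancel]

theorem one_le_neg_two_mul_cos_two_mul_sq {θ : ℝ} (hθ : |θ| ≤ Real.pi / 6) :
    1 ≤ (-2 * Real.cos (2 * θ)) ^ 2 := by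
  have hcos : 1 / 2 ≤ Real.cos (2 * θ) := by
    rw [← Real.cos_pi_div_three, ← Real.cos_abs (2 * θ), abs_mul, abs_two]
    apply Real.cos_le_cos_of_nonneg_of_le_pi <;> linarith [abs_nonneg θ, Real.pi_pos]
  nlinarith

theorem loopValue_of_eq_exp {A : ℂˣ} {θ : ℝ} (hA : (A : ℂ) = Complex.exp (θ * Complex.I)) :
    loopValue A = ((-2 * Real.cos (2 * θ) : ℝ) : ℂ) := by
  rw [loopValue, Units.val_inv_eq_inv_val, hA, ← Complex.exp_neg, ← Complex.exp_nat_mul,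
    ← Complex.exp_nat_mul]
  push_cast
  rw [Complex.cos]
  ring_nf

theorem star_eq_inv_of_eq_exp {A : ℂˣ} {θ : ℝ} (hA : (A : ℂ) = Complex.exp (θ * Complex.I)) :
    star A = A⁻¹ := by
  have hnorm : ‖(A : ℂ)‖ = 1 := by rw [hA, Complex.norm_exp_ofReal_mul_I]
  ext
  rw [Units.coe_star, Units.val_inv_eq_inv_val, Complex.star_def, Complex.inv_eq_conj hnorm]

theorem unitary_rep_three_strand_braid_group_general
    (θ : ℝ) (A : ℂ) (hA : A = Complex.exp (θ * Complex.I))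
    (δ : ℝ) (hδ : δ = -2 * Real.cos (2 * θ)) (hδ_sq : 1 ≤ δ ^ 2)
    (b : ℝ) (hb : b = Real.sqrt (1 - δ⁻¹ ^ 2))
    (U₁ U₂ ρ₁ ρ₂ : Matrix (Fin 2) (Fin 2) ℂ)
    (hU₁ : U₁ = (δ : ℂ) • !![1, 0; 0, 0])
    (hU₂ : U₂ = (δ : ℂ) • !![((δ⁻¹ : ℝ) : ℂ) ^ 2, ((δ⁻¹ : ℝ) : ℂ) * (b : ℂ);
                             ((δ⁻¹ : ℝ) : ℂ) * (b : ℂ), (b : ℂ) ^ 2])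
    (hρ₁ : ρ₁ = A • (1 : Matrix (Fin 2) (Fin 2) ℂ) + A⁻¹ • U₁)
    (hρ₂ : ρ₂ = A • (1 : Matrix (Fin 2) (Fin 2) ℂ) + A⁻¹ • U₂) :
    ρ₁ * ρ₁ᴴ = 1 ∧ ρ₂ * ρ₂ᴴ = 1 ∧
    ρ₁ * ρ₂ * ρ₁ = ρ₂ * ρ₁ * ρ₂ ∧
    ρ₁ * (A⁻¹ • (1 : Matrix (Fin 2) (Fin 2) ℂ) + A • U₁) = 1 ∧
    (A⁻¹ • (1 : Matrix (Fin 2) (Fin 2) ℂ) + A • U₁) * ρ₁ = 1 ∧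
    ρ₂ * (A⁻¹ • (1 : Matrix (Fin 2) (Fin 2) ℂ) + A • U₂) = 1 ∧
    (A⁻¹ • (1 : Matrix (Fin 2) (Fin 2) ℂ) + A • U₂) * ρ₂ = 1 := by
  lift A to ℂˣ using hA ▸ (Complex.exp_ne_zero _).isUnit
  have hloop : loopValue A = (δ : ℂ) := by rw [loopValue_of_eq_exp hA, hδ]
  have hstar : star A = A⁻¹ := star_eq_inv_of_eq_exp hA
  have h_real (r : ℝ) : IsSelfAdjoint (r : ℂ) := Complex.conj_ofReal r
  have hδ_ne : δ ≠ 0 := by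
    rintro rfl
    norm_num at hδ_sq
  replace hU₁ : U₁ = scaledProjection (δ : ℂ) ![1, 0] := by
    simp [hU₁, scaledProjection_pair]
  replace hU₂ : U₂ = scaledProjection (δ : ℂ) ![((δ⁻¹ : ℝ) : ℂ), (b : ℂ)] := by
    rw [hU₂, scaledProjection_pair _ (h_real _) (h_real b)]
  have hsa₁ : IsSelfAdjoint U₁ := hU₁ ▸ isSelfAdjoint_scaledProjection (h_real δ) _
  have hsa₂ : IsSelfAdjoint U₂ := hU₂ ▸ isSelfAdjoint_scaledProjection (h_real δ) _
  have hab : δ⁻¹ ^ 2 + b ^ 2 = 1 := hb ▸ inv_sq_add_sqrt_one_sub_inv_sq_sq hδ_sq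
  have hTL : IsTemperleyLiebPair (loopValue A) U₁ U₂ := by
    rw [hloop, hU₁, hU₂]
    exact isTemperleyLiebPair_scaledProjection_pair (h_real _) (h_real b)
      (mod_cast mul_inv_cancel₀ hδ_ne) (mod_cast hab)
  have hxx := hTL.mul_self_left
  have hyy := hTL.mul_self_right
  rw [← Units.val_inv_eq_inv_val] at hρ₁ hρ₂ ⊢
  subst hρ₁ hρ₂
  exact ⟨Unitary.mul_star_self_of_mem (kauffman_mem_unitary hstar hsa₁ hxx),
    Unitary.mul_star_self_of_mem (kauffman_mem_unitary hstar hsa₂ hyy), hTL.kauffman_braid,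
    kauffman_mul_kauffman_inv hxx, kauffman_inv_mul_kauffman hxx,
    kauffman_mul_kauffman_inv hyy, kauffman_inv_mul_kauffman hyy⟩

/-- For `|θ| ≤ π/6`, `A = e^{iθ}`, `δ = -2cos(2θ)`, one has
`δ² ≥ 1` (so `b = √(1 - δ⁻²)` is real), and with `U₁ = δ·[[1,0],[0,0]]`,
`U₂ = δ·[[δ⁻², δ⁻¹b],[δ⁻¹b, b²]]`, the matrices `ρ(σᵢ) = A·I + A⁻¹·Uᵢ` are
unitary, satisfy the braid relation `ρ(σ₁)ρ(σ₂)ρ(σ₁) = ρ(σ₂)ρ(σ₁)ρ(σ₂)`,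
and each is invertible with inverse `A⁻¹·I + A·Uᵢ`.  Hence they define a
unitary representation of the three-strand braid group `B₃`. -/
theorem unitary_rep_three_strand_braid_group
    (θ : ℝ) (hθ : |θ| ≤ Real.pi / 6)
    (A : ℂ) (hA : A = Complex.exp (θ * Complex.I))
    (δ : ℝ) (hδ : δ = -2 * Real.cos (2 * θ))
    (b : ℝ) (hb : b = Real.sqrt (1 - δ⁻¹ ^ 2))
    (U₁ U₂ ρ₁ ρ₂ : Matrix (Fin 2) (Fin 2) ℂ)
    (hU₁ : U₁ = (δ : ℂ) • !![1, 0; 0, 0])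
    (hU₂ : U₂ = (δ : ℂ) • !![((δ⁻¹ : ℝ) : ℂ) ^ 2, ((δ⁻¹ : ℝ) : ℂ) * (b : ℂ);
                             ((δ⁻¹ : ℝ) : ℂ) * (b : ℂ), (b : ℂ) ^ 2])
    (hρ₁ : ρ₁ = A • (1 : Matrix (Fin 2) (Fin 2) ℂ) + A⁻¹ • U₁)
    (hρ₂ : ρ₂ = A • (1 : Matrix (Fin 2) (Fin 2) ℂ) + A⁻¹ • U₂) :
    1 ≤ δ ^ 2 ∧
    ρ₁ * ρ₁ᴴ = 1 ∧ ρ₂ * ρ₂ᴴ = 1 ∧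
    ρ₁ * ρ₂ * ρ₁ = ρ₂ * ρ₁ * ρ₂ ∧
    ρ₁ * (A⁻¹ • (1 : Matrix (Fin 2) (Fin 2) ℂ) + A • U₁) = 1 ∧
    (A⁻¹ • (1 : Matrix (Fin 2) (Fin 2) ℂ) + A • U₁) * ρ₁ = 1 ∧
    ρ₂ * (A⁻¹ • (1 : Matrix (Fin 2) (Fin 2) ℂ) + A • U₂) = 1 ∧
    (A⁻¹ • (1 : Matrix (Fin 2) (Fin 2) ℂ) + A • U₂) * ρ₂ = 1 := by
  have hδ_sq : 1 ≤ δ ^ 2 := hδ ▸ one_le_neg_two_mul_cos_two_mul_sq hθ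
  exact ⟨hδ_sq, unitary_rep_three_strand_braid_group_general θ A hA δ hδ hδ_sq b hb U₁ U₂ ρ₁ ρ₂
    hU₁ hU₂ hρ₁ hρ₂⟩
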